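/- Let n ≥ 3 be an odd integer and let k ≥ 2 be an integer with 3 ∤ (4k^n − 1), and set d = 4(1 − 4k^n)^n. Then d + 36 = 4(9 − (4k^n − 1)^n), so ℚ(√(d + 36)) = ℚ(√(9 − (4k^n − 1)^n)), and n divides the class number of the imaginary quadratic field ℚ(√(d + 36)). -/

import Mathlib

/-- The quadratic field `ℚ(√d)`, realized as the subfield of `ℂ` generated over `ℚ`
by a complex square root of `d`. -/
noncomputable def Qsqrt (d : ℤ) : IntermediateField ℚ ℂ :=
  IntermediateField.adjoin ℚ {((d : ℂ) ^ ((1 : ℂ) / 2))}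

/-- The class number of `ℚ(√d)`: the order of the ideal class group of its ring of
integers. -/
noncomputable def classNumSqrt (d : ℤ) : ℕ :=
  Nat.card (ClassGroup (NumberField.RingOfIntegers (Qsqrt d)))

/-!
Put `m = 4kⁿ - 1` and `N = 9 - mⁿ`, so that `(3 + √N)(3 - √N) = mⁿ` with coprime factors and
`(3 + √N) = Iⁿ` for an ideal `I`. Since `N ≡ 2 (mod 4)` is negative, the only units are `±1` and
every integer of `ℚ(√N)` is `a + √d` with `a`, `d` integers and `d ≤ 0`. If the class of `I` had
order less than `n`, then `3 + √N = (a + √d)ᵖ` for some prime `p ∣ n`. Comparing real parts gives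
`a ∣ 3` and `a ≡ 3 (mod p)`, whence `a = 3`; comparing norms gives `9 - d = m ^ (n / p) ≡ -1`,
that is `d ≡ 10`, modulo `4qᵖ` for any prime `q ∣ k`. Hence the rational part `X` of `(3 + √10)ᵖ`
satisfies `X ≡ 3 (mod 4qᵖ)`. With `p = 2h + 1` and `(3 + √10)ʲ = Xⱼ + Yⱼ√10`, either `h` is odd
and `X - 3 = 2XₕXₕ₊₁` is twice an odd number, or `h` is even and `X - 3 = 20YₕYₕ₊₁`. The latter
is impossible too: `q ^ (2h)` divides neither of the coprime factors `Yₕ` and `Yₕ₊₁`, by size if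
`q` is odd, and because `2 ^ e ∣ Yⱼ` forces `2 ^ e ∣ j` if `q = 2`.
-/

lemma prime_pow_dvd_or_of_isCoprime {R : Type*} [CommRing R] [IsDomain R] [IsPrincipalIdealRing R]
    {q x y : R} {e : ℕ} (hq : Prime q) (hxy : IsCoprime x y) (h : q ^ e ∣ x * y) :
    q ^ e ∣ x ∨ q ^ e ∣ y := by
  by_cases hx : q ∣ x
  · have hy : ¬ q ∣ y := fun hy => hq.not_isUnit (hxy.isUnit_of_dvd' hx hy)
    exact .inl (((Prime.coprime_iff_not_dvd hq).mpr hy).pow_left.dvd_of_dvd_mul_right h)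
  · exact .inr (((Prime.coprime_iff_not_dvd hq).mpr hx).pow_left.dvd_of_dvd_mul_left h)

section ZsqrtdPowers

variable {d : ℤ}

lemma add_star_eq_two_mul_re (z : ℤ√d) : z + star z = ((2 * z.re : ℤ) : ℤ√d) := by
  ext <;> simp [two_mul]

lemma re_dvd_re_pow_of_odd (z : ℤ√d) {j : ℕ} (hj : Odd j) : z.re ∣ (z ^ j).re := by
  have h : z + star z ∣ z ^ j + star (z ^ j) := by
    rw [star_pow]
    exact hj.add_dvd_pow_add_pow z (star z)
  rw [add_star_eq_two_mul_re, add_star_eq_two_mul_re, Zsqrtd.intCast_dvd_intCast] at h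
  exact Int.dvd_of_mul_dvd_mul_left two_ne_zero h

lemma re_pow_prime_modEq (z : ℤ√d) {p : ℕ} (hp : p.Prime) (hp2 : p ≠ 2) :
    (z ^ p).re ≡ z.re [ZMOD p] := by
  obtain ⟨r, hr⟩ := exists_add_pow_prime_eq hp z (star z)
  have htrace : (2 * z.re) ^ p = 2 * (z ^ p).re + p * (z * star z * r).re := by
    rw [add_star_eq_two_mul_re, ← star_pow, add_star_eq_two_mul_re, ← Int.cast_pow,
      ← Int.cast_natCast p, mul_assoc, mul_assoc, ← mul_assoc z] at hr
    simpa only [Zsqrtd.re_add, Zsqrtd.re_intCast, Zsqrtd.re_smul] using congrArg Zsqrtd.re hr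
  have hmod : 2 * (z ^ p).re ≡ 2 * z.re [ZMOD p] := by
    refine Int.ModEq.trans ?_ (Int.ModEq.pow_prime_eq_self hp (2 * z.re))
    rw [htrace]
    exact Int.modEq_iff_dvd.mpr (by simp)
  have hcop : IsCoprime (p : ℤ) 2 :=
    Nat.isCoprime_iff_coprime.mpr ((Nat.coprime_primes hp Nat.prime_two).mpr hp2)
  refine Int.modEq_iff_dvd.mpr (hcop.dvd_of_dvd_mul_left ?_)
  rw [mul_sub]
  exact hmod.dvd

lemma re_eq_three_of_re_pow_prime_eq_three {z : ℤ√d} {p : ℕ} (hp : p.Prime) (hp2 : p ≠ 2)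
    (hz : (z ^ p).re = 3) : z.re = 3 := by
  have hdvd : z.re ∣ 3 := hz ▸ re_dvd_re_pow_of_odd z (hp.odd_of_ne_two hp2)
  have hmod : (p : ℤ) ∣ 3 - z.re := (hz ▸ re_pow_prime_modEq z hp hp2).symm.dvd
  have hcases : z.re = 1 ∨ z.re = -1 ∨ z.re = 3 ∨ z.re = -3 := by
    have := (Nat.dvd_prime Nat.prime_three).mp (Int.natAbs_dvd_natAbs.mpr hdvd)
    omega
  have not_dvd_two_pow (e : ℕ) : ¬ p ∣ 2 ^ e := fun h =>
    hp2 ((Nat.prime_dvd_prime_iff_eq hp Nat.prime_two).mp (hp.dvd_of_dvd_pow h))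
  rcases hcases with h | h | h | h
  · rw [h, show (3 - 1 : ℤ) = (2 ^ 1 : ℕ) by rfl, Int.natCast_dvd_natCast] at hmod
    exact absurd hmod (not_dvd_two_pow 1)
  · rw [h, show (3 - -1 : ℤ) = (2 ^ 2 : ℕ) by rfl, Int.natCast_dvd_natCast] at hmod
    exact absurd hmod (not_dvd_two_pow 2)
  · exact h
  · rw [h, show (3 - -3 : ℤ) = (2 ^ 1 * 3 : ℕ) by rfl, Int.natCast_dvd_natCast] at hmod
    have hp3 : p = 3 := (Nat.prime_dvd_prime_iff_eq hp Nat.prime_three).mp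
      ((hp.dvd_mul.mp hmod).resolve_left (not_dvd_two_pow 1))
    have hcube : (z ^ 3).re = z.re * (z.re ^ 2 + 3 * (d * z.im ^ 2)) := by
      simp only [pow_succ, pow_zero, one_mul, Zsqrtd.re_mul, Zsqrtd.im_mul]
      ring
    rw [hp3, hcube, h] at hz
    omega

lemma re_pow_modEq_of_modEq {d' g : ℤ} (hd : d ≡ d' [ZMOD g]) (a b : ℤ) (j : ℕ) :
    ((⟨a, b⟩ : ℤ√d) ^ j).re ≡ ((⟨a, b⟩ : ℤ√d') ^ j).re [ZMOD g] := by
  suffices h : ((⟨a, b⟩ : ℤ√d) ^ j).re ≡ ((⟨a, b⟩ : ℤ√d') ^ j).re [ZMOD g] ∧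
      ((⟨a, b⟩ : ℤ√d) ^ j).im ≡ ((⟨a, b⟩ : ℤ√d') ^ j).im [ZMOD g] from h.1
  induction j with
  | zero => simp
  | succ j ih =>
    simp only [pow_succ, Zsqrtd.re_mul, Zsqrtd.im_mul]
    exact ⟨(ih.1.mul_right a).add ((hd.mul ih.2).mul_right b),
      (ih.1.mul_right b).add (ih.2.mul_right a)⟩

end ZsqrtdPowers

section PellUnit

/-- The fundamental unit `3 + √10` of `ℤ[√10]`. It enters because `9 - M ≡ 10` modulo `g` whenever
`M ≡ -1`, so that the powers of `3 + √(9 - M)` are congruent to its powers. -/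
def pellUnit : ℤ√10 := ⟨3, 1⟩

lemma norm_pellUnit_pow (j : ℕ) : (pellUnit ^ j).norm = (-1) ^ j :=
  map_pow Zsqrtd.normMonoidHom pellUnit j

lemma re_pellUnit_pow_succ (j : ℕ) :
    (pellUnit ^ (j + 1)).re = 3 * (pellUnit ^ j).re + 10 * (pellUnit ^ j).im := by
  simp only [pow_succ, Zsqrtd.re_mul, pellUnit]
  ring

lemma im_pellUnit_pow_succ (j : ℕ) :
    (pellUnit ^ (j + 1)).im = (pellUnit ^ j).re + 3 * (pellUnit ^ j).im := by
  simp only [pow_succ, Zsqrtd.im_mul, pellUnit]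
  ring

lemma pellUnit_pow_re_pos_and_im_nonneg (j : ℕ) :
    0 < (pellUnit ^ j).re ∧ 0 ≤ (pellUnit ^ j).im := by
  induction j with
  | zero => simp
  | succ j ih =>
    rw [re_pellUnit_pow_succ, im_pellUnit_pow_succ]
    omega

lemma im_pellUnit_pow_pos {j : ℕ} (hj : j ≠ 0) : 0 < (pellUnit ^ j).im := by
  obtain ⟨i, rfl⟩ := Nat.exists_eq_succ_of_ne_zero hj
  have := pellUnit_pow_re_pos_and_im_nonneg i
  rw [im_pellUnit_pow_succ]
  omega

lemma im_pellUnit_pow_succ_le (j : ℕ) : (pellUnit ^ (j + 1)).im ≤ 7 ^ j := by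
  induction j with
  | zero => simp [pellUnit]
  | succ j ih =>
    have := pellUnit_pow_re_pos_and_im_nonneg j
    rw [im_pellUnit_pow_succ] at ih
    rw [im_pellUnit_pow_succ, re_pellUnit_pow_succ, im_pellUnit_pow_succ, pow_succ]
    omega

lemma odd_re_pellUnit_pow (j : ℕ) : Odd (pellUnit ^ j).re := by
  induction j with
  | zero => simp
  | succ j ih =>
    rw [re_pellUnit_pow_succ]
    exact (odd_two_mul_add_one 1).mul ih |>.add_even (even_iff_two_dvd.mpr ⟨5 * _, by ring⟩)

lemma even_of_even_im_pellUnit_pow {j : ℕ} (h : Even (pellUnit ^ j).im) : Even j := by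
  suffices h' : ∀ i, (Even (pellUnit ^ i).im ↔ Even i) from (h' j).mp h
  intro i
  induction i with
  | zero => simp
  | succ i ih =>
    rw [im_pellUnit_pow_succ, Int.even_add, Int.even_mul, ih, Nat.even_add_one]
    simp [Int.not_even_iff_odd.mpr (odd_re_pellUnit_pow i), show ¬ Even (3 : ℤ) by decide]

lemma two_pow_dvd_of_dvd_im_pellUnit_pow {e j : ℕ} (h : (2 : ℤ) ^ e ∣ (pellUnit ^ j).im) :
    2 ^ e ∣ j := by
  induction e generalizing j with
  | zero => simp
  | succ e ih =>
    obtain ⟨i, rfl⟩ := even_of_even_im_pellUnit_pow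
      (even_iff_two_dvd.mpr ((dvd_pow_self 2 e.succ_ne_zero).trans h))
    have him : (pellUnit ^ (i + i)).im = 2 * ((pellUnit ^ i).re * (pellUnit ^ i).im) := by
      rw [pow_add, Zsqrtd.im_mul]
      ring
    rw [him, pow_succ'] at h
    have hcop : IsCoprime ((2 : ℤ) ^ e) (pellUnit ^ i).re :=
      (Int.isCoprime_two_left.mpr (odd_re_pellUnit_pow i)).pow_left
    have hi : 2 ^ e ∣ i :=
      ih (hcop.dvd_of_dvd_mul_left (Int.dvd_of_mul_dvd_mul_left two_ne_zero h))
    rw [pow_succ', ← two_mul]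
    exact mul_dvd_mul_left 2 hi

lemma isCoprime_im_pellUnit_pow_succ (j : ℕ) :
    IsCoprime (pellUnit ^ j).im (pellUnit ^ (j + 1)).im := by
  have hre : IsCoprime (pellUnit ^ j).im (pellUnit ^ j).re := by
    have h := norm_pellUnit_pow j
    rw [Zsqrtd.norm_def] at h
    refine ⟨-((-1) ^ j * 10 * (pellUnit ^ j).im), (-1) ^ j * (pellUnit ^ j).re, ?_⟩
    have hsq : ((-1 : ℤ) ^ j) * (-1) ^ j = 1 := by rw [← mul_pow]; simp
    linear_combination (-1) ^ j * h + hsq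
  rw [im_pellUnit_pow_succ]
  exact (IsCoprime.add_mul_right_right_iff).mpr hre

lemma not_prime_pow_dvd_im_pellUnit_pow {q h i : ℕ} (hq : q.Prime) (hh : h ≠ 0) (hi : i ≠ 0)
    (hle : i ≤ h + 1) : ¬ (q : ℤ) ^ (2 * h) ∣ (pellUnit ^ i).im := by
  intro hdvd
  rcases hq.two_le.eq_or_lt with rfl | hq3
  · have h1 : 2 ^ (2 * h) ≤ i :=
      Nat.le_of_dvd (Nat.pos_of_ne_zero hi) (two_pow_dvd_of_dvd_im_pellUnit_pow (mod_cast hdvd))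
    have h2 : 2 * h < 2 ^ (2 * h) := Nat.lt_two_pow_self
    omega
  · obtain ⟨j, rfl⟩ := Nat.exists_eq_succ_of_ne_zero hi
    have hlt : (pellUnit ^ (j + 1)).im < (q : ℤ) ^ (2 * h) :=
      calc (pellUnit ^ (j + 1)).im ≤ 7 ^ j := im_pellUnit_pow_succ_le j
        _ ≤ 7 ^ h := pow_le_pow_right₀ (by norm_num) (by omega)
        _ < 9 ^ h := pow_lt_pow_left₀ (by norm_num) (by norm_num) hh
        _ = 3 ^ (2 * h) := by rw [pow_mul]; norm_num
        _ ≤ (q : ℤ) ^ (2 * h) := pow_le_pow_left₀ (by norm_num) (mod_cast hq3) _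
    exact (Int.le_of_dvd (im_pellUnit_pow_pos hi) hdvd).not_gt hlt

lemma not_prime_pow_dvd_mul_im_pellUnit_pow {q h : ℕ} (hq : q.Prime) (hh : h ≠ 0) :
    ¬ (q : ℤ) ^ (2 * h + 1) ∣ 5 * ((pellUnit ^ h).im * (pellUnit ^ (h + 1)).im) := by
  intro hdvd
  have hqZ : Prime (q : ℤ) := Nat.prime_iff_prime_int.mp hq
  have hprod : (q : ℤ) ^ (2 * h) ∣ (pellUnit ^ h).im * (pellUnit ^ (h + 1)).im := by
    rcases eq_or_ne q 5 with rfl | hq5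
    · rw [pow_succ'] at hdvd
      exact Int.dvd_of_mul_dvd_mul_left (by norm_num) hdvd
    · have hcop : IsCoprime (q : ℤ) 5 :=
        Nat.isCoprime_iff_coprime.mpr ((Nat.coprime_primes hq Nat.prime_five).mpr hq5)
      exact hcop.pow_left.dvd_of_dvd_mul_left ((pow_dvd_pow _ (2 * h).le_succ).trans hdvd)
  rcases prime_pow_dvd_or_of_isCoprime hqZ (isCoprime_im_pellUnit_pow_succ h) hprod with h' | h'
  · exact not_prime_pow_dvd_im_pellUnit_pow hq hh hh h.le_succ h'
  · exact not_prime_pow_dvd_im_pellUnit_pow hq hh h.succ_ne_zero le_rfl h'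

lemma re_pellUnit_pow_two_mul_add_one (h : ℕ) :
    (pellUnit ^ (2 * h + 1)).re =
        3 * (-1) ^ h + 20 * ((pellUnit ^ h).im * (pellUnit ^ (h + 1)).im) ∧
      (pellUnit ^ (2 * h + 1)).re =
        2 * ((pellUnit ^ h).re * (pellUnit ^ (h + 1)).re) - 3 * (-1) ^ h := by
  have hadd : (pellUnit ^ (2 * h + 1)).re = (pellUnit ^ h).re * (pellUnit ^ (h + 1)).re +
      10 * ((pellUnit ^ h).im * (pellUnit ^ (h + 1)).im) := by
    rw [show 2 * h + 1 = h + (h + 1) by ring, pow_add pellUnit h, Zsqrtd.re_mul]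
    ring
  have hsub : 3 * (-1) ^ h = (pellUnit ^ h).re * (pellUnit ^ (h + 1)).re -
      10 * ((pellUnit ^ h).im * (pellUnit ^ (h + 1)).im) := by
    rw [← norm_pellUnit_pow, Zsqrtd.norm_def, re_pellUnit_pow_succ, im_pellUnit_pow_succ]
    ring
  exact ⟨by linear_combination hadd - hsub, by linear_combination hadd + hsub⟩

lemma not_four_mul_prime_pow_dvd_re_pellUnit_pow_sub_three {q j : ℕ} (hq : q.Prime) (hj : Odd j)
    (hj1 : j ≠ 1) : ¬ 4 * (q : ℤ) ^ j ∣ (pellUnit ^ j).re - 3 := by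
  obtain ⟨h, rfl⟩ := hj
  intro hdvd
  obtain ⟨him, hre⟩ := re_pellUnit_pow_two_mul_add_one h
  rcases Nat.even_or_odd h with heven | hodd
  · rw [heven.neg_one_pow] at him
    have h4 : (pellUnit ^ (2 * h + 1)).re - 3 =
        4 * (5 * ((pellUnit ^ h).im * (pellUnit ^ (h + 1)).im)) := by linarith
    rw [h4] at hdvd
    exact not_prime_pow_dvd_mul_im_pellUnit_pow hq (by rintro rfl; exact hj1 rfl)
      (Int.dvd_of_mul_dvd_mul_left (by norm_num) hdvd)
  · rw [hodd.neg_one_pow] at hre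
    obtain ⟨c, hc⟩ := (odd_re_pellUnit_pow h).mul (odd_re_pellUnit_pow (h + 1))
    have h4 : (4 : ℤ) ∣ (pellUnit ^ (2 * h + 1)).re - 3 := dvd_of_mul_right_dvd hdvd
    omega

theorem re_pow_prime_ne_three {p q : ℕ} (hp : p.Prime) (hp2 : p ≠ 2) (hq : q.Prime) {a d : ℤ}
    (h : 4 * (q : ℤ) ^ p ∣ a ^ 2 - d + 1) : ((⟨a, 1⟩ : ℤ√d) ^ p).re ≠ 3 := by
  intro hre
  obtain rfl : a = 3 := re_eq_three_of_re_pow_prime_eq_three hp hp2 hre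
  have hd : d ≡ 10 [ZMOD 4 * (q : ℤ) ^ p] :=
    Int.modEq_iff_dvd.mpr (by convert h using 1; ring)
  have hmod := re_pow_modEq_of_modEq hd 3 1 p
  rw [hre] at hmod
  exact not_four_mul_prime_pow_dvd_re_pellUnit_pow_sub_three hq (hp.odd_of_ne_two hp2)
    hp.ne_one hmod.dvd

end PellUnit

section QuadraticIntegers

open IntermediateField NumberField ComplexConjugate

lemma adjoin_simple_algebraMap_mul {F E : Type*} [Field F] [Field E] [Algebra F E] {c : F}
    (hc : c ≠ 0) (w : E) : F⟮algebraMap F E c * w⟯ = F⟮w⟯ := by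
  apply le_antisymm <;> rw [adjoin_simple_le_iff]
  · exact mul_mem (IntermediateField.algebraMap_mem _ c) (mem_adjoin_simple_self F w)
  · have hw : w = algebraMap F E c⁻¹ * (algebraMap F E c * w) := by
      rw [← mul_assoc, ← map_mul, inv_mul_cancel₀ hc, map_one, one_mul]
    have hmem := mul_mem (IntermediateField.algebraMap_mem F⟮algebraMap F E c * w⟯ c⁻¹)
      (mem_adjoin_simple_self F (algebraMap F E c * w))
    rwa [← hw] at hmem

lemma exists_eq_add_mul_of_mem_adjoin_simple {F E : Type*} [Field F] [Field E] [Algebra F E]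
    {c : F} {w x : E} (hw : w ^ 2 = algebraMap F E c) (hx : x ∈ F⟮w⟯) :
    ∃ r s : F, x = algebraMap F E r + algebraMap F E s * w := by
  have hwi : IsIntegral F w := .of_pow two_pos (hw ▸ isIntegral_algebraMap)
  rw [← mem_toSubalgebra, adjoin_simple_toSubalgebra_of_isAlgebraic hwi.isAlgebraic] at hx
  induction hx using Algebra.adjoin_induction with
  | mem y hy => exact ⟨0, 1, by simp [Set.mem_singleton_iff.mp hy]⟩
  | algebraMap r => exact ⟨r, 0, by simp⟩
  | add y z _ _ hy hz =>
    obtain ⟨a, b, rfl⟩ := hy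
    obtain ⟨a', b', rfl⟩ := hz
    exact ⟨a + a', b + b', by simp only [map_add]; ring⟩
  | mul y z _ _ hy hz =>
    obtain ⟨a, b, rfl⟩ := hy
    obtain ⟨a', b', rfl⟩ := hz
    refine ⟨a * a' + b * b' * c, a * b' + b * a', ?_⟩
    simp only [map_add, map_mul]
    linear_combination algebraMap F E b * algebraMap F E b' * hw

lemma exists_intCast_eq_of_isIntegral_ratCast {L : Type*} [Field L] [CharZero L] {r : ℚ}
    (h : IsIntegral ℤ (r : L)) : ∃ a : ℤ, (a : ℚ) = r := by
  rw [← eq_ratCast (algebraMap ℚ L), isIntegral_algebraMap_iff (algebraMap ℚ L).injective] at h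
  exact IsIntegrallyClosed.isIntegral_iff.mp h

lemma not_isSquare_of_emod_four_eq_two {N : ℤ} (h : N % 4 = 2) : ¬ IsSquare N := by
  rintro ⟨a, rfl⟩
  rcases Int.even_or_odd' a with ⟨b, rfl | rfl⟩ <;> ring_nf at h <;> omega

lemma re_eq_zero_of_sq_eq_ofReal {c : ℂ} {r : ℝ} (hr : r ≤ 0) (hc : c ^ 2 = r) : c.re = 0 := by
  have hre : c.re * c.re - c.im * c.im = r := by simpa [sq] using congrArg Complex.re hc
  have him : c.re * c.im + c.im * c.re = 0 := by simpa [sq] using congrArg Complex.im hc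
  rcases mul_eq_zero.mp (show c.re * c.im = 0 by linarith) with h | h
  · exact h
  · rw [h] at hre
    nlinarith [mul_self_nonneg c.re]

section RealPart

variable {d : ℤ} {c : ℂ} (hd : d ≤ 0) (hc : c ^ 2 = d)
include hd hc

lemma re_eq_zero_of_sq_eq_intCast : c.re = 0 :=
  re_eq_zero_of_sq_eq_ofReal (r := d) (mod_cast hd) (by simpa using hc)

lemma conj_eq_neg_of_sq_eq_intCast : conj c = -c := by
  apply Complex.ext <;> simp [re_eq_zero_of_sq_eq_intCast hd hc]

lemma normSq_intCast_add (a : ℤ) : Complex.normSq (a + c) = (a ^ 2 - d : ℤ) := by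
  rw [← Complex.ofReal_inj, Complex.normSq_eq_conj_mul_self, map_add,
    conj_eq_neg_of_sq_eq_intCast hd hc, map_intCast]
  push_cast
  linear_combination -hc

lemma re_intCast_add_pow (a : ℤ) (j : ℕ) :
    ((a + c) ^ j).re = ((⟨a, 1⟩ : ℤ√d) ^ j).re := by
  let φ : ℤ√d →+* ℂ := Zsqrtd.lift ⟨c, by rw [← sq, hc]⟩
  have hφ (z : ℤ√d) : (φ z).re = z.re := by
    simp [φ, Zsqrtd.lift, re_eq_zero_of_sq_eq_intCast hd hc]
  rw [← hφ, map_pow]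
  simp [φ, Zsqrtd.lift]

end RealPart

variable {N : ℤ} {w : ℂ}

lemma exists_trace_norm_of_isIntegral (hN : N < 0) (hw : w ^ 2 = N) {x : ℂ} (hx : x ∈ ℚ⟮w⟯)
    (hint : IsIntegral ℤ x) :
    ∃ (r s : ℚ) (T M : ℤ), x = r + s * w ∧ (T : ℚ) = 2 * r ∧ (M : ℚ) = r ^ 2 - s ^ 2 * N := by
  obtain ⟨r, s, hrs⟩ := exists_eq_add_mul_of_mem_adjoin_simple (c := (N : ℚ)) (by simpa using hw) hx
  simp only [eq_ratCast] at hrs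
  have hconj : conj x = r - s * w := by
    simp [hrs, conj_eq_neg_of_sq_eq_intCast hN.le hw, sub_eq_add_neg]
  have hint' : IsIntegral ℤ (conj x) := hint.map (starRingEnd ℂ).toIntAlgHom
  have htrace : x + conj x = ((2 * r : ℚ) : ℂ) := by
    rw [hconj, hrs]
    push_cast
    ring
  have hnorm : x * conj x = ((r ^ 2 - s ^ 2 * N : ℚ) : ℂ) := by
    rw [hconj, hrs]
    push_cast
    linear_combination (-s ^ 2 : ℂ) * hw
  obtain ⟨T, hT⟩ := exists_intCast_eq_of_isIntegral_ratCast (htrace ▸ hint.add hint')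
  obtain ⟨M, hM⟩ := exists_intCast_eq_of_isIntegral_ratCast (hnorm ▸ hint.mul hint')
  exact ⟨r, s, T, M, hrs, hT, hM⟩

lemma exists_eq_intCast_add_of_isIntegral (hN : N < 0) (hN4 : N % 4 = 2) (hw : w ^ 2 = N) {x : ℂ}
    (hx : x ∈ ℚ⟮w⟯) (hint : IsIntegral ℤ x) :
    ∃ (a d : ℤ) (c : ℂ), x = a + c ∧ c ^ 2 = d ∧ d ≤ 0 ∧ IsSquare (N * d) := by
  obtain ⟨r, s, T, M, hrs, hT, hM⟩ := exists_trace_norm_of_isIntegral hN hw hx hint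
  have hsq : IsSquare (N * (T ^ 2 - 4 * M)) := by
    rw [← Rat.isSquare_intCast_iff]
    refine ⟨2 * s * N, ?_⟩
    push_cast
    rw [hT, hM]
    ring
  obtain ⟨a, rfl | rfl⟩ := Int.even_or_odd' T
  · have hr : r = a := by push_cast at hT; linarith
    have hd : (a ^ 2 - M : ℤ) = s ^ 2 * (N : ℚ) := by
      push_cast
      rw [hM, hr]
      ring
    refine ⟨a, a ^ 2 - M, s * w, by rw [hrs, hr, Rat.cast_intCast], ?_, ?_, ?_⟩
    · rw [mul_pow, hw]
      exact_mod_cast hd.symm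
    · have : ((a ^ 2 - M : ℤ) : ℚ) ≤ 0 :=
        hd ▸ mul_nonpos_of_nonneg_of_nonpos (sq_nonneg s) (mod_cast hN.le)
      exact_mod_cast this
    · rw [← Rat.isSquare_intCast_iff]
      exact ⟨s * N, by rw [Int.cast_mul, hd]; ring⟩
  · refine absurd hsq (not_isSquare_of_emod_four_eq_two ?_)
    have h1 : ((2 * a + 1) ^ 2 - 4 * M) % 4 = 1 := by ring_nf; omega
    rw [Int.mul_emod, hN4, h1]
    rfl

lemma eq_one_or_neg_one_of_isIntegral_of_mul_eq_one (hN : N < 0) (hN4 : N % 4 = 2)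
    (hw : w ^ 2 = N) {x y : ℂ} (hx : x ∈ ℚ⟮w⟯) (hy : y ∈ ℚ⟮w⟯) (hxi : IsIntegral ℤ x)
    (hyi : IsIntegral ℤ y) (hxy : x * y = 1) : x = 1 ∨ x = -1 := by
  obtain ⟨a, d, c, rfl, hc, hd, hsq⟩ := exists_eq_intCast_add_of_isIntegral hN hN4 hw hx hxi
  obtain ⟨a', d', c', rfl, hc', hd', -⟩ := exists_eq_intCast_add_of_isIntegral hN hN4 hw hy hyi
  have hmul : (a ^ 2 - d) * (a' ^ 2 - d') = 1 := by
    have h := congrArg Complex.normSq hxy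
    rw [map_mul, normSq_intCast_add hd hc, normSq_intCast_add hd' hc', map_one] at h
    exact_mod_cast h
  have hnorm : a ^ 2 - d = 1 := by
    have := sq_nonneg a
    rcases Int.eq_one_or_neg_one_of_mul_eq_one hmul with h | h <;> omega
  rcases eq_or_ne a 0 with rfl | ha
  · obtain rfl : d = -1 := by linarith
    exact absurd hsq (not_isSquare_of_emod_four_eq_two (by omega))
  · have ha2 : 0 < a ^ 2 := by positivity
    obtain rfl : d = 0 := by omega
    have hc0 : c = 0 := by simpa using hc
    rw [sub_zero, sq_eq_one_iff] at hnorm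
    simpa [hc0] using mod_cast hnorm

end QuadraticIntegers

section ClassGroupOrder

lemma orderOf_mk0_eq_of_pow_eq_span {R : Type*} [CommRing R] [IsDedekindDomain R]
    {n : ℕ} (hn : n ≠ 0) {β : R} {I : Ideal R} (hI0 : I ∈ nonZeroDivisors (Ideal R))
    (hI : I ^ n = Ideal.span {β}) (hunit : ∀ u : Rˣ, ∃ v : Rˣ, v ^ n = u)
    (hpow : ∀ p : ℕ, p.Prime → p ∣ n → ∀ z : R, z ^ p ≠ β) :
    orderOf (ClassGroup.mk0 ⟨I, hI0⟩) = n := by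
  refine orderOf_eq_of_pow_and_pow_div_prime (Nat.pos_of_ne_zero hn) ?_ fun p hp hpn h => ?_
  · rw [← map_pow]
    exact (ClassGroup.mk0_eq_one_iff (pow_mem hI0 n)).mpr ⟨β, hI⟩
  · rw [← map_pow] at h
    obtain ⟨α, hα⟩ := (ClassGroup.mk0_eq_one_iff (pow_mem hI0 (n / p))).mp h
    rw [Ideal.submodule_span_eq] at hα
    have hassoc : Associated (α ^ p) β := by
      rw [← Ideal.span_singleton_eq_span_singleton, ← hI, ← Ideal.span_singleton_pow, ← hα,
        ← pow_mul, Nat.div_mul_cancel hpn]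
    obtain ⟨u, hu⟩ := hassoc
    obtain ⟨v, rfl⟩ := hunit u
    refine hpow p hp hpn (α * (v : R) ^ (n / p)) ?_
    rw [mul_pow, ← pow_mul, Nat.div_mul_cancel hpn, ← hu, Units.val_pow_eq_pow_val]

theorem dvd_card_classGroup_of_mul_eq_pow {R : Type*} [CommRing R]
    [IsDedekindDomain R] {n : ℕ} (hn : n ≠ 0) {β γ c : R} (hβ : β ≠ 0) (hcop : IsCoprime β γ)
    (hmul : β * γ = c ^ n) (hunit : ∀ u : Rˣ, ∃ v : Rˣ, v ^ n = u)
    (hpow : ∀ p : ℕ, p.Prime → p ∣ n → ∀ z : R, z ^ p ≠ β) :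
    n ∣ Nat.card (ClassGroup R) := by
  obtain ⟨I, hI⟩ := exists_eq_pow_of_mul_eq_pow_of_coprime
    ((Ideal.isCoprime_span_singleton_iff β γ).mpr hcop) (c := Ideal.span {c}) (n := n)
    (by rw [Ideal.span_singleton_mul_span_singleton, Ideal.span_singleton_pow, hmul])
  have hI0 : I ≠ 0 := by
    rintro rfl
    rw [zero_pow hn] at hI
    exact hβ (by simpa using hI)
  rw [← orderOf_mk0_eq_of_pow_eq_span hn (mem_nonZeroDivisors_of_ne_zero hI0) hI.symm hunit hpow]
  exact orderOf_dvd_natCard _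

end ClassGroupOrder

section Divisibility

open IntermediateField NumberField

variable {n q : ℕ} {m : ℤ} {w : ℂ}

lemma nine_sub_pow_emod_four (hnodd : Odd n) (hm : 4 ∣ m + 1) : (9 - m ^ n) % 4 = 2 := by
  have h : 4 ∣ m ^ n + 1 := hm.trans (by simpa using hnodd.add_dvd_pow_add_pow m 1)
  omega

lemma isCoprime_three_add_three_sub {R : Type*} [CommRing R] {ω c : R}
    (h6 : IsCoprime (6 : R) c) (hmul : (3 + ω) * (3 - ω) = c) : IsCoprime (3 + ω) (3 - ω) := by
  obtain ⟨a, b, hab⟩ := h6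
  exact ⟨a + b * (3 - ω), a, by linear_combination hab + b * hmul⟩

lemma pow_prime_ne_three_add (hnodd : Odd n) (hm9 : 9 < m ^ n) (hq : q.Prime)
    (hm : 4 * (q : ℤ) ^ n ∣ m + 1) (hw : w ^ 2 = ((9 - m ^ n : ℤ) : ℂ)) {p : ℕ} (hp : p.Prime)
    (hpn : p ∣ n) {z : ℂ} (hz : z ∈ ℚ⟮w⟯) (hint : IsIntegral ℤ z) : z ^ p ≠ 3 + w := by
  intro hpow
  have hN : 9 - m ^ n < 0 := by omega
  have hN4 := nine_sub_pow_emod_four hnodd (dvd_of_mul_right_dvd hm)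
  have hpodd : Odd p := hnodd.of_dvd_nat hpn
  obtain ⟨a, d, c, rfl, hc, hd, -⟩ := exists_eq_intCast_add_of_isIntegral hN hN4 hw hz hint
  have hnorm : a ^ 2 - d = m ^ (n / p) := by
    apply hpodd.strictMono_pow.injective
    have h := congrArg Complex.normSq hpow
    rw [map_pow, normSq_intCast_add hd hc, show (3 : ℂ) + w = (3 : ℤ) + w by simp,
      normSq_intCast_add hN.le hw, ← Int.cast_pow, Int.cast_inj] at h
    simp only [h, ← pow_mul, Nat.div_mul_cancel hpn]
    ring
  have hdvd : 4 * (q : ℤ) ^ p ∣ a ^ 2 - d + 1 := by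
    rw [hnorm]
    calc 4 * (q : ℤ) ^ p ∣ 4 * (q : ℤ) ^ n := mul_dvd_mul_left 4 (pow_dvd_pow _
          (Nat.le_of_dvd hnodd.pos hpn))
      _ ∣ m + 1 := hm
      _ ∣ m ^ (n / p) + 1 := by
        simpa using (hnodd.of_dvd_nat (Nat.div_dvd_of_dvd hpn)).add_dvd_pow_add_pow m 1
  refine re_pow_prime_ne_three hp (by rintro rfl; exact absurd hpodd (by decide)) hq hdvd ?_
  have h := congrArg Complex.re hpow
  rw [re_intCast_add_pow hd hc, Complex.add_re, re_eq_zero_of_sq_eq_intCast hN.le hw] at h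
  exact_mod_cast h

theorem dvd_card_classGroup_of_embedding {R : Type*} [CommRing R] [IsDedekindDomain R] {ι : R →+* ℂ}
    (hι : Function.Injective ι) (hmem : ∀ z, ι z ∈ ℚ⟮w⟯) (hint : ∀ z, IsIntegral ℤ (ι z)) {ω : R}
    (hω : ι ω = w) (hnodd : Odd n) (hm9 : 9 < m ^ n) (hq : q.Prime)
    (hm : 4 * (q : ℤ) ^ n ∣ m + 1) (hm3 : ¬ 3 ∣ m) (hw : w ^ 2 = ((9 - m ^ n : ℤ) : ℂ)) :
    n ∣ Nat.card (ClassGroup R) := by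
  have hN : 9 - m ^ n < 0 := by omega
  have hm4 : 4 ∣ m + 1 := dvd_of_mul_right_dvd hm
  have hN4 := nine_sub_pow_emod_four hnodd hm4
  have hmul : (3 + ω) * (3 - ω) = (m : R) ^ n := by
    apply hι
    simp only [map_mul, map_add, map_sub, map_pow, map_intCast, map_ofNat, hω]
    push_cast at hw
    linear_combination -hw
  have h6 : IsCoprime (6 : ℤ) (m ^ n) := by
    refine IsCoprime.pow_right (?_ : IsCoprime (2 * 3) m)
    exact .mul_left (Int.isCoprime_two_left.mpr (by rw [Int.odd_iff]; omega))
      ((Prime.coprime_iff_not_dvd Int.prime_three).mpr hm3)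
  have hcop : IsCoprime (3 + ω) (3 - ω) :=
    isCoprime_three_add_three_sub (by simpa using h6.map (Int.castRingHom R)) hmul
  have h0 : 3 + ω ≠ 0 := by
    intro h
    rw [h, zero_mul] at hmul
    have := congrArg ι hmul
    simp only [map_zero, map_pow, map_intCast] at this
    have : m ^ n = 0 := mod_cast this.symm
    omega
  refine dvd_card_classGroup_of_mul_eq_pow hnodd.pos.ne' h0 hcop hmul (fun u => ⟨u, ?_⟩)
    fun p hp hpn z hz => ?_
  · have huv : ι u * ι ↑u⁻¹ = 1 := by rw [← map_mul, u.mul_inv, map_one]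
    rcases eq_one_or_neg_one_of_isIntegral_of_mul_eq_one hN hN4 hw (hmem _) (hmem _) (hint _)
      (hint _) huv with h | h
    · obtain rfl : u = 1 := Units.ext (hι (by simpa using h))
      exact one_pow n
    · obtain rfl : u = -1 := Units.ext (hι (by simpa using h))
      exact hnodd.neg_one_pow
  · refine pow_prime_ne_three_add hnodd hm9 hq hm hw hp hpn (hmem z) (hint z) ?_
    rw [← map_pow, hz, map_add, map_ofNat, hω]

theorem dvd_card_classGroup_adjoin_sqrt (hnodd : Odd n) (hm9 : 9 < m ^ n) (hq : q.Prime)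
    (hm : 4 * (q : ℤ) ^ n ∣ m + 1) (hm3 : ¬ 3 ∣ m) (hw : w ^ 2 = ((9 - m ^ n : ℤ) : ℂ)) :
    n ∣ Nat.card (ClassGroup (𝓞 ℚ⟮w⟯)) := by
  have hwint : IsIntegral ℤ w := .of_pow two_pos (hw ▸ isIntegral_algebraMap)
  have : NumberField ℚ⟮w⟯ :=
    { to_charZero := inferInstance
      to_finiteDimensional := adjoin.finiteDimensional hwint.tower_top }
  let ω : 𝓞 ℚ⟮w⟯ := ⟨AdjoinSimple.gen ℚ w,
    (isIntegral_algebraMap_iff (algebraMap ℚ⟮w⟯ ℂ).injective).mp hwint⟩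
  let ι : 𝓞 ℚ⟮w⟯ →+* ℂ := (algebraMap ℚ⟮w⟯ ℂ).comp (algebraMap (𝓞 ℚ⟮w⟯) ℚ⟮w⟯)
  have hι : Function.Injective ι :=
    (algebraMap ℚ⟮w⟯ ℂ).injective.comp RingOfIntegers.coe_injective
  have hint (z : 𝓞 ℚ⟮w⟯) : IsIntegral ℤ (ι z) := z.isIntegral.map ι.toIntAlgHom
  exact dvd_card_classGroup_of_embedding hι (fun z => (z : ℚ⟮w⟯).2) hint
    (ω := ω) rfl hnodd hm9 hq hm hm3 hw

end Divisibility

section QuadraticFields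

open IntermediateField NumberField

lemma Qsqrt_eq_adjoin {d : ℤ} {w : ℂ} (hw : w ^ 2 = d) : Qsqrt d = ℚ⟮w⟯ := by
  have hroot : ((d : ℂ) ^ ((1 : ℂ) / 2)) ^ 2 = w ^ 2 := by
    rw [hw, one_div]
    exact_mod_cast Complex.cpow_nat_inv_pow (d : ℂ) two_ne_zero
  rw [Qsqrt]
  rcases sq_eq_sq_iff_eq_or_eq_neg.mp hroot with h | h
  · rw [h]
  · rw [h, ← adjoin_simple_algebraMap_mul (neg_ne_zero.mpr (one_ne_zero (α := ℚ))) w]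
    simp

lemma Qsqrt_sq_mul {c : ℤ} (hc : c ≠ 0) (d : ℤ) : Qsqrt (c ^ 2 * d) = Qsqrt d := by
  obtain ⟨w, hw⟩ := IsAlgClosed.exists_pow_nat_eq (d : ℂ) two_pos
  have hcw : (algebraMap ℚ ℂ c * w) ^ 2 = ((c ^ 2 * d : ℤ) : ℂ) := by
    simp [mul_pow, hw]
  rw [Qsqrt_eq_adjoin hw, Qsqrt_eq_adjoin hcw, adjoin_simple_algebraMap_mul (mod_cast hc)]

lemma classNumSqrt_eq_of_Qsqrt_eq {d : ℤ} {K : IntermediateField ℚ ℂ} (h : Qsqrt d = K) :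
    classNumSqrt d = Nat.card (ClassGroup (𝓞 K)) := by
  subst h
  rfl

theorem classNumber_dvd_d_add_thirtySix_general
    (n : ℕ) (hn : 3 ≤ n) (hnodd : Odd n) (k : ℤ) (hk : 2 ≤ k)
    (m : ℤ) (hm0 : 0 < m) (hm : 4 * k ^ n ∣ m + 1) (h3 : ¬ (3 : ℤ) ∣ m)
    (d : ℤ) (hd : d = 4 * (-m) ^ n) :
    d + 36 = 4 * (9 - m ^ n) ∧ Qsqrt (d + 36) = Qsqrt (9 - m ^ n) ∧ n ∣ classNumSqrt (d + 36) := by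
  have hdN : d + 36 = 4 * (9 - m ^ n) := by
    rw [hd, hnodd.neg_pow]
    ring
  have hfield : Qsqrt (d + 36) = Qsqrt (9 - m ^ n) := hdN ▸ Qsqrt_sq_mul two_ne_zero (9 - m ^ n)
  refine ⟨hdN, hfield, ?_⟩
  obtain ⟨q, hq, hqk⟩ := Int.exists_prime_and_dvd (n := k) (by omega)
  have hk8 : 2 ^ 3 ≤ k ^ n := (pow_le_pow_left₀ (by norm_num) hk 3).trans
    (pow_le_pow_right₀ (by omega) hn)
  have hm9 : 9 < m ^ n :=
    calc 9 < m := by have := Int.le_of_dvd (by omega) hm; omega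
      _ ≤ m ^ n := le_self_pow₀ hm0 hnodd.pos.ne'
  obtain ⟨w, hw⟩ := IsAlgClosed.exists_pow_nat_eq ((9 - m ^ n : ℤ) : ℂ) two_pos
  rw [classNumSqrt_eq_of_Qsqrt_eq (hfield.trans (Qsqrt_eq_adjoin hw))]
  refine dvd_card_classGroup_adjoin_sqrt hnodd hm9 (Int.prime_iff_natAbs_prime.mp hq) ?_ h3 hw
  refine (mul_dvd_mul_left 4 (pow_dvd_pow_of_dvd ?_ n)).trans hm
  exact Int.natAbs_dvd.mpr hqk

end QuadraticFields

/-- Let `n ≥ 3` be an odd integer and `k ≥ 2` an integer with `3 ∤ (4kⁿ − 1)`, and set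
`d = 4(1 − 4kⁿ)ⁿ`. Then `d + 36 = 4(9 − (4kⁿ − 1)ⁿ)`, so
`ℚ(√(d + 36)) = ℚ(√(9 − (4kⁿ − 1)ⁿ))`, and `n` divides the class number of
`ℚ(√(d + 36))`. -/
theorem classNumber_dvd_d_add_thirtySix
    (n : ℕ) (hn : 3 ≤ n) (hnodd : Odd n) (k : ℤ) (hk : 2 ≤ k)
    (h3 : ¬ (3 : ℤ) ∣ (4 * k ^ n - 1))
    (d : ℤ) (hd : d = 4 * (1 - 4 * k ^ n) ^ n) :
    d + 36 = 4 * (9 - (4 * k ^ n - 1) ^ n) ∧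
      Qsqrt (d + 36) = Qsqrt (9 - (4 * k ^ n - 1) ^ n) ∧
      n ∣ classNumSqrt (d + 36) :=
  classNumber_dvd_d_add_thirtySix_general n hn hnodd k hk (4 * k ^ n - 1)
    (by linarith [one_le_pow₀ (one_le_two.trans hk) (n := n)]) (by simp) h3 d (by rw [hd, neg_sub])
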